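/- arXiv:1509.04088 — 4 statements merged into one kernel-verified Lean document; each statement's English description precedes it below -/
import Mathlib

section
/- Let S be a finite semigroup, δ the homomorphism from nonempty words over a finite alphabet A to S induced by a map A → S, and k > |S|. Let a_1⋯a_n be a word over A with n ≥ k+1. For each ℓ ∈ {1,…,n−k+1}, let j_ℓ ∈ {ℓ+1,…,ℓ+k−1} be the minimum index j > ℓ such that δ(a_ℓ⋯a_{i−1}) = δ(a_ℓ⋯a_j) for some i ∈ {ℓ+1,…,j} (this minimum exists and satisfies j_ℓ ≤ ℓ+k−1). Then j_ℓ ≤ j_{ℓ+1} for every ℓ ∈ {1,…,n−k}. -/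
/-- `sprod f a b` is the product `f a * f (a+1) * ⋯ * f b` in a semigroup (for `a ≤ b`). -/
def sprod {S : Type*} [Semigroup S] (f : ℕ → S) (a b : ℕ) : S :=
  (List.range (b - a)).foldl (fun x r => x * f (a + r + 1)) (f a)

theorem sprod_step {S : Type*} [Semigroup S] (f : ℕ → S) (a d : ℕ) :
    sprod f a (a + (d + 1)) = sprod f a (a + d) * f (a + d + 1) := by
  simp [sprod, List.range_succ]

theorem sprod_left {S : Type*} [Semigroup S] (f : ℕ → S) (a d : ℕ) :
    sprod f a (a + 1 + d) = f a * sprod f (a + 1) (a + 1 + d) := by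
  induction d with
  | zero => simp [sprod]
  | succ d ih =>
    rw [sprod_step f (a + 1) d, ← mul_assoc, ← ih]
    have h := sprod_step f a (d + 1)
    rw [show a + 1 + (d + 1) = a + (d + 1 + 1) by omega, h,
      show a + (d + 1) = a + 1 + d by omega]

theorem sprod_left' {S : Type*} [Semigroup S] (f : ℕ → S) (a b : ℕ) (h : a + 1 ≤ b) :
    sprod f a b = f a * sprod f (a + 1) b := by
  obtain ⟨d, rfl⟩ := Nat.exists_eq_add_of_le h
  exact sprod_left f a d

/-- For a finite semigroup `S`, `δ` induced by `φ : A → S`, `k > |S|` and a word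
`a 1 ⋯ a n` with `n ≥ k+1`: for each `ℓ ∈ {1,…,n-k+1}` the set
`J ℓ = {j : ℓ+1 ≤ j ≤ ℓ+k-1, ∃ i ∈ {ℓ+1,…,j}, δ(a ℓ ⋯ a (i-1)) = δ(a ℓ ⋯ a j)}` is nonempty
(so its minimum `j_ℓ = sInf (J ℓ)` exists and is at most `ℓ+k-1`), and `j_ℓ ≤ j_{ℓ+1}` for
every `ℓ ∈ {1,…,n-k}`. -/
theorem statement2 {A S : Type*} [Fintype A] [Semigroup S] [Fintype S]
    (φ : A → S) {k n : ℕ} (hk : Fintype.card S < k) (hn : k + 1 ≤ n) (a : ℕ → A) :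
    let f : ℕ → S := fun p => φ (a p)
    let J : ℕ → Set ℕ := fun ℓ =>
      {j | ℓ + 1 ≤ j ∧ j ≤ ℓ + k - 1 ∧
        ∃ i, ℓ + 1 ≤ i ∧ i ≤ j ∧ sprod f ℓ (i - 1) = sprod f ℓ j}
    (∀ ℓ, 1 ≤ ℓ → ℓ ≤ n - k + 1 → (J ℓ).Nonempty) ∧
      ∀ ℓ, 1 ≤ ℓ → ℓ ≤ n - k → sInf (J ℓ) ≤ sInf (J (ℓ + 1)) := by
  intro f J
  have hne : ∀ ℓ, (J ℓ).Nonempty := by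
    intro ℓ
    have key : ∀ x y : Fin k, x < y → sprod f ℓ (ℓ + x) = sprod f ℓ (ℓ + y) →
        (J ℓ).Nonempty := by
      intro x y hxy h
      have hxy' : (x : ℕ) < y := hxy
      have hy := y.isLt
      refine ⟨ℓ + y, by omega, by omega, ℓ + x + 1, by omega, by omega, ?_⟩
      simpa using h
    obtain ⟨x, y, hxy, h⟩ := Fintype.exists_ne_map_eq_of_card_lt
      (fun r : Fin k => sprod f ℓ (ℓ + r)) (by simpa using hk)
    rcases lt_or_gt_of_ne hxy with h1 | h1
    · exact key x y h1 h
    · exact key y x h1 h.symm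
  refine ⟨fun ℓ _ _ => hne ℓ, fun ℓ _ _ => ?_⟩
  obtain ⟨h1, h2, i, h3, h4, h5⟩ := Nat.sInf_mem (hne (ℓ + 1))
  by_cases hj : sInf (J (ℓ + 1)) ≤ ℓ + k - 1
  · refine Nat.sInf_le ⟨by omega, hj, i, by omega, h4, ?_⟩
    rw [sprod_left' f ℓ (i - 1) (by omega), h5, ← sprod_left' f ℓ _ (by omega)]
  · obtain ⟨_, h6, _⟩ := Nat.sInf_mem (hne ℓ)
    omega
end

section
/- Let S be a finite semigroup, δ the homomorphism from nonempty words over a finite alphabet A to S induced by a map A → S, and k > |S|. Let a_1⋯a_n be a word over A with n ≥ k, and set r = n−k+1. For each ℓ ∈ {1,…,r}, let j_ℓ be the minimum index j ∈ {ℓ+1,…,ℓ+k−1} such that δ(a_ℓ⋯a_{i−1}) = δ(a_ℓ⋯a_j) for some i ∈ {ℓ+1,…,j}, let i_ℓ be the minimum such i, and let u_ℓ = a_{i_ℓ}⋯a_{j_ℓ}. Then for all positive integers m_1,…,m_r, δ(a_1⋯a_n) = δ(a_1⋯a_{j_1})·δ(u_1)^{m_1}·δ(a_{j_1+1}⋯a_{j_2})·δ(u_2)^{m_2}·⋯·δ(a_{j_{r−1}+1}⋯a_{j_r})·δ(u_r)^{m_r}·δ(a_{j_r+1}⋯a_n),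 where a factor δ(a_{p+1}⋯a_q) is omitted (treated as an identity) whenever p = q. -/
/-- `spow x m` is the `m`-th power `x^m` of `x` in a semigroup, for `m ≥ 1`
(with the junk value `spow x 0 = x`). -/
def spow {S : Type*} [Semigroup S] (x : S) : ℕ → S
  | 0 => x
  | 1 => x
  | n + 2 => spow x (n + 1) * x

theorem sprod_self' {S : Type*} [Semigroup S] (f : ℕ → S) (a : ℕ) : sprod f a a = f a := by
  simp [sprod]

theorem sprod_succ' {S : Type*} [Semigroup S] (f : ℕ → S) {a b : ℕ} (h : a ≤ b) :
    sprod f a (b + 1) = sprod f a b * f (b + 1) := by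
  unfold sprod
  rw [Nat.sub_add_comm h, List.range_succ, List.foldl_append]
  have : a + (b - a) + 1 = b + 1 := by omega
  simp [this]

theorem sprod_mul' {S : Type*} [Semigroup S] (f : ℕ → S) {a b c : ℕ} (h : a ≤ b) (hc : b < c) :
    sprod f a b * sprod f (b + 1) c = sprod f a c := by
  induction c, hc using Nat.le_induction with
  | base => rw [sprod_self', sprod_succ' f h]
  | succ c hc ih =>
    rw [sprod_succ' f hc, sprod_succ' f (by omega : a ≤ c), ← mul_assoc, ih]

theorem mul_spow' {S : Type*} [Semigroup S] (x u : S) (h : x * u = x) (m : ℕ) :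
    x * spow u m = x := by
  induction m with
  | zero => exact h
  | succ m ih =>
    cases m with
    | zero => exact h
    | succ m =>
      show x * (spow u (m + 1) * u) = x
      rw [← mul_assoc, ih, h]

/-- A repetition in a window is absorbed by the whole prefix. -/
theorem absorb' {S : Type*} [Semigroup S] (f : ℕ → S) {l i j : ℕ} (hl : 1 ≤ l)
    (hi : l + 1 ≤ i) (hij : i ≤ j) (h : sprod f l (i - 1) = sprod f l j) :
    sprod f 1 j * sprod f i j = sprod f 1 j := by
  have key : sprod f l j * sprod f i j = sprod f l j := by
    conv_lhs => rw [← h]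
    have := sprod_mul' f (a := l) (b := i - 1) (c := j) (by omega) (by omega)
    rwa [Nat.sub_add_cancel (by omega)] at this
  rcases Nat.eq_or_lt_of_le hl with rfl | hl
  · exact key
  · have := sprod_mul' f (a := 1) (b := l - 1) (c := j) (by omega) (by omega)
    rw [Nat.sub_add_cancel (by omega)] at this
    rw [← this, mul_assoc, key]

theorem exists_rep' {S : Type*} [Semigroup S] [Fintype S] (f : ℕ → S) {k : ℕ}
    (hk : Fintype.card S < k) (l : ℕ) :
    ∃ j, l + 1 ≤ j ∧ j ≤ l + k - 1 ∧
        ∃ i, l + 1 ≤ i ∧ i ≤ j ∧ sprod f l (i - 1) = sprod f l j := by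
  obtain ⟨x, y, hxy, h⟩ := Fintype.exists_ne_map_eq_of_card_lt
    (fun t : Fin k => sprod f l (l + t)) (by simpa using hk)
  have hx := x.2
  have hy := y.2
  have hne : (x : ℕ) ≠ y := fun e => hxy (Fin.ext e)
  rcases Nat.lt_or_gt_of_ne hne with hlt | hlt
  · exact ⟨l + y, by omega, by omega, l + x + 1, by omega, by omega, h⟩
  · exact ⟨l + x, by omega, by omega, l + y + 1, by omega, by omega, h.symm⟩

theorem rep_down' {S : Type*} [Semigroup S] (f : ℕ → S) {l i j : ℕ}
    (hi : l + 1 + 1 ≤ i) (hij : i ≤ j) (h : sprod f (l + 1) (i - 1) = sprod f (l + 1) j) :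
    sprod f l (i - 1) = sprod f l j := by
  rw [← sprod_mul' f (le_refl l) (by omega : l < i - 1), h, sprod_mul' f le_rfl (by omega)]

/-- For a finite semigroup `S`, `δ` induced by `φ : A → S`, `k > |S|`, a word `a 1 ⋯ a n`
with `n ≥ k`, `r = n-k+1`, and for each `ℓ` the indices `j_ℓ = jj ℓ` (minimal
`j ∈ {ℓ+1,…,ℓ+k-1}` with `δ(a ℓ ⋯ a (i-1)) = δ(a ℓ ⋯ a j)` for some `i ∈ {ℓ+1,…,j}`),
`i_ℓ = ii ℓ` (the minimal such `i`) and `u_ℓ = δ(a (i_ℓ) ⋯ a (j_ℓ))`: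
for all positive exponents `m 1, …, m r`,
`δ(a 1 ⋯ a n) = δ(a 1 ⋯ a (j_1))·u_1^(m 1)·δ(a (j_1+1) ⋯ a (j_2))·u_2^(m 2)·⋯·u_r^(m r)·δ(a (j_r+1) ⋯ a n)`,
where a gap factor `δ(a (p+1) ⋯ a q)` is omitted whenever `p = q` (encoded by the `if`s). -/
theorem statement3 {A S : Type*} [Fintype A] [Semigroup S] [Fintype S]
    (φ : A → S) {k n : ℕ} (hk : Fintype.card S < k) (hn : k ≤ n) (a : ℕ → A) :
    let f : ℕ → S := fun p => φ (a p)
    let J : ℕ → Set ℕ := fun ℓ =>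
      {j | ℓ + 1 ≤ j ∧ j ≤ ℓ + k - 1 ∧
        ∃ i, ℓ + 1 ≤ i ∧ i ≤ j ∧ sprod f ℓ (i - 1) = sprod f ℓ j}
    let jj : ℕ → ℕ := fun ℓ => sInf (J ℓ)
    let ii : ℕ → ℕ := fun ℓ =>
      sInf {i | ℓ + 1 ≤ i ∧ i ≤ jj ℓ ∧ sprod f ℓ (i - 1) = sprod f ℓ (jj ℓ)}
    let u : ℕ → S := fun ℓ => sprod f (ii ℓ) (jj ℓ)
    let r : ℕ := n - k + 1
    ∀ m : ℕ → ℕ, (∀ ℓ, 1 ≤ ℓ → ℓ ≤ r → 1 ≤ m ℓ) →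
      sprod f 1 n =
        (let core : S :=
          (List.range (r - 1)).foldl
            (fun x p =>
              (if jj (p + 1) < jj (p + 2) then
                  x * sprod f (jj (p + 1) + 1) (jj (p + 2))
                else x) * spow (u (p + 2)) (m (p + 2)))
            (sprod f 1 (jj 1) * spow (u 1) (m 1))
        if jj r < n then core * sprod f (jj r + 1) n else core) := by
  intro f J jj ii u r m _
  have hJ : ∀ l, jj l ∈ J l := fun l => Nat.sInf_mem (exists_rep' f hk l)
  have habs : ∀ l, 1 ≤ l → sprod f 1 (jj l) * spow (u l) (m l) = sprod f 1 (jj l) := by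
    intro l hl
    obtain ⟨_, _, hne⟩ := hJ l
    obtain ⟨h1, h2, h3⟩ := Nat.sInf_mem
      (s := {i | l + 1 ≤ i ∧ i ≤ jj l ∧ sprod f l (i - 1) = sprod f l (jj l)}) hne
    exact mul_spow' _ _ (absorb' f hl h1 h2 h3) _
  have hmono : ∀ l, jj l ≤ jj (l + 1) := by
    intro l
    obtain ⟨h1, h2, i, h3, h4, h5⟩ := hJ (l + 1)
    by_cases hle : jj (l + 1) ≤ l + k - 1
    · exact Nat.sInf_le ⟨by omega, hle, i, by omega, h4, rep_down' f h3 h4 h5⟩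
    · have := (hJ l).2.1
      omega
  have hcore : ∀ t, (List.range t).foldl
            (fun x p =>
              (if jj (p + 1) < jj (p + 2) then
                  x * sprod f (jj (p + 1) + 1) (jj (p + 2))
                else x) * spow (u (p + 2)) (m (p + 2)))
            (sprod f 1 (jj 1) * spow (u 1) (m 1)) = sprod f 1 (jj (t + 1)) := by
    intro t
    induction t with
    | zero => exact habs 1 le_rfl
    | succ t ih =>
      rw [List.range_succ, List.foldl_append, ih]
      simp only [List.foldl_cons, List.foldl_nil]
      have h1 := (hJ (t + 1)).1
      have e : (if jj (t + 1) < jj (t + 2) then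
          sprod f 1 (jj (t + 1)) * sprod f (jj (t + 1) + 1) (jj (t + 2))
          else sprod f 1 (jj (t + 1))) = sprod f 1 (jj (t + 2)) := by
        split_ifs with hlt
        · exact sprod_mul' f (by omega) hlt
        · rw [le_antisymm (hmono (t + 1)) (not_lt.mp hlt)]
      rw [e]
      exact habs (t + 2) (by omega)
  have hc := hcore (r - 1)
  rw [show r - 1 + 1 = r from rfl] at hc
  have h1 := (hJ r).1
  have h2 := (hJ r).2.1
  have hr : r = n - k + 1 := rfl
  rw [hc]
  show _ = if jj r < n then sprod f 1 (jj r) * sprod f (jj r + 1) n else sprod f 1 (jj r)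
  split_ifs with hlt
  · exact (sprod_mul' f (by omega) hlt).symm
  · rw [show jj r = n by omega]
end

section
/- Let A be a finite alphabet and k ≥ 1. For all nonempty words u, v over A, β'_A(uv) = β'_A(u) ++ α_{t_k(u)}(β'_A(v)), where α_{t_k(u)} is applied letterwise and ++ denotes concatenation. -/
/-- `tk k w` is the longest suffix of the word `w` of length at most `k`. -/
def tk {A : Type*} (k : ℕ) (w : List A) : List A := w.drop (w.length - k)

/-- Auxiliary function: `betaAux k pre w` is the word over `B_k = A* × A` whose `p`-th
letter is `(tk k (pre ++ (first p-1 letters of w)), p-th letter of w)`. -/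
def betaAux {A : Type*} (k : ℕ) : List A → List A → List (List A × A)
  | _, [] => []
  | pre, a :: w => (tk k pre, a) :: betaAux k (pre ++ [a]) w

/-- `betak k w` is the word `β'_A(w)` over `B_k` whose `p`-th letter is
`(tk k (a 1 ⋯ a (p-1)), a p)` for `w = a 1 ⋯ a n`. -/
def betak {A : Type*} (k : ℕ) (w : List A) : List (List A × A) := betaAux k [] w

/-- `alphak k w` is the map `α_w : B_k → B_k`, `(w', a) ↦ (tk k (w ++ w'), a)`. -/
def alphak {A : Type*} (k : ℕ) (w : List A) (b : List A × A) : List A × A :=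
  (tk k (w ++ b.1), b.2)

theorem tk_key {A : Type*} (k : ℕ) (u p : List A) :
    tk k (tk k u ++ tk k p) = tk k (u ++ p) := by
  unfold tk
  by_cases h : p.length ≤ k
  · have e : p.length - k = 0 := by omega
    simp only [e, List.drop_zero, List.drop_append, List.drop_drop, List.length_append,
      List.length_drop]
    congr 2 <;> omega
  · have e1 : (u ++ p).drop ((u ++ p).length - k) = p.drop (p.length - k) := by
      rw [List.drop_append, List.drop_eq_nil_of_le (by simp; omega), List.nil_append]
      congr 1
      simp
      omega
    rw [e1, List.drop_append, List.drop_eq_nil_of_le (by simp; omega), List.nil_append,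
      List.drop_drop]
    congr 1
    simp
    omega

theorem betaAux_append {A : Type*} (k : ℕ) (u v p : List A) :
    betaAux k p (u ++ v) = betaAux k p u ++ betaAux k (p ++ u) v := by
  induction u generalizing p with
  | nil => simp [betaAux]
  | cons a u ih => simp [betaAux, ih]

theorem betaAux_map {A : Type*} (k : ℕ) (u v p : List A) :
    betaAux k (u ++ p) v = (betaAux k p v).map (alphak k (tk k u)) := by
  induction v generalizing p with
  | nil => simp [betaAux]
  | cons a v ih => simp [betaAux, alphak, tk_key, ← ih]

/-- For all nonempty words `u, v` over `A`:
`β'_A(uv) = β'_A(u) ++ α_{tk k u}(β'_A(v))`, with `α` applied letterwise. -/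
theorem statement10 {A : Type*} [Fintype A] {k : ℕ} (hk : 1 ≤ k)
    (u v : List A) (hu : u ≠ []) (hv : v ≠ []) :
    betak k (u ++ v) = betak k u ++ (betak k v).map (alphak k (tk k u)) := by
  unfold betak
  rw [betaAux_append, ← betaAux_map]
  simp
end

section
/- Let A be a finite alphabet and k ≥ 1. For every nonempty word w over A, ν(β'_A(w)) = Φ_k(w), where Φ_k(w) is regarded as a word over the alphabet consisting of the length-(k+1) words over A. -/
/-- `Phik k w` is the list of all factors of `w` of length `k+1`, in order of occurrence,
regarded as a word over the alphabet of length-`(k+1)` words over `A`. -/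
def Phik {A : Type*} (k : ℕ) (w : List A) : List (List A) :=
  (List.range (w.length - k)).map fun p => (w.drop p).take (k + 1)

/-- `nuk k` is the monoid homomorphism `ν` from words over `B_k` to words over `A^{k+1}`
determined on letters by `ν(w', a) = w'a` if `|w'| = k and `ν(w', a) = 1` if `|w'| < k`. -/
def nuk {A : Type*} (k : ℕ) (l : List (List A × A)) : List (List A) :=
  l.filterMap fun b => if b.1.length = k then some (b.1 ++ [b.2]) else none

theorem betaAux_snoc {A : Type*} (k : ℕ) (a : A) (w : List A) : ∀ pre : List A,
    betaAux k pre (w ++ [a]) = betaAux k pre w ++ [(tk k (pre ++ w), a)] := by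
  induction w with
  | nil => intro pre; simp [betaAux]
  | cons b w ih => intro pre; simp [betaAux, ih]

theorem Phik_snoc {A : Type*} (k : ℕ) (a : A) (w : List A) :
    Phik k (w ++ [a]) = Phik k w ++ (if k ≤ w.length then [tk k w ++ [a]] else []) := by
  unfold Phik tk
  split_ifs with h
  · have e : (w ++ [a]).length - k = (w.length - k) + 1 := by simp; omega
    rw [e, List.range_succ, List.map_append]
    congr 1
    · apply List.map_congr_left
      intro p hp
      have hp' := List.mem_range.mp hp
      rw [List.drop_append_of_le_length (by omega),
        List.take_append_of_le_length (by rw [List.length_drop]; omega)]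
    · rw [List.map_singleton, List.drop_append_of_le_length (by omega),
        List.take_of_length_le (by simp; omega)]
  · have e : (w ++ [a]).length - k = 0 := by simp; omega
    have e' : w.length - k = 0 := by omega
    rw [e, e']; simp

theorem main_aux {A : Type*} (k : ℕ) (w : List A) : nuk k (betak k w) = Phik k w := by
  induction w using List.reverseRecOn with
  | nil => simp [nuk, betak, betaAux, Phik]
  | append_singleton w a ih =>
    rw [Phik_snoc, ← ih]
    unfold nuk betak
    rw [betaAux_snoc, List.filterMap_append]
    congr 1
    have e : (tk k w).length = k ↔ k ≤ w.length := by
      simp only [tk, List.length_drop]; omega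
    by_cases h : k ≤ w.length <;> simp [e, h]

/-- For every nonempty word `w` over `A`, `ν(β'_A(w)) = Φ_k(w)`. -/
theorem statement11 {A : Type*} [Fintype A] {k : ℕ} (hk : 1 ≤ k)
    (w : List A) (hw : w ≠ []) :
    nuk k (betak k w) = Phik k w := by
  exact main_aux k w
end
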